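/- Let D be an ADF and let v and v' be strongly admissible interpretations of D. Then v and v' have a unique infimum in the set of strongly admissible interpretations of D ordered by ≤_i: there exists a strongly admissible interpretation w of D with w ≤_i v and w ≤_i v' such that every strongly admissible interpretation w'' of D with w'' ≤_i v and w'' ≤_i v' satisfies w'' ≤_i w. -/

import Mathlib

/-!
A justification of `a` with respect to `x` remains one, with the same sets, with respect to any `y`
carrying more information. Hence a join of strongly admissible interpretations is again strongly
admissible, since each argument decided in the join is decided in one of the joined interpretations.
The information order is bounded complete, so the strongly admissible interpretations below `v` and
`v'`, a set bounded by `v`, have a join; this join is the required infimum.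
-/

/-- Three truth values: true, false, undecided. -/
inductive TV : Type
  | t | f | u
deriving DecidableEq, Repr

/-- The information order on truth values: u <_i t and u <_i f. -/
def TV.ile (x y : TV) : Prop := x = TV.u ∨ x = y

/-- The information order on interpretations, extended pointwise. -/
def ILE {A : Type*} (v w : A → TV) : Prop := ∀ a, TV.ile (v a) (w a)

/-- An abstract dialectical framework on a set of arguments `A`:
each argument `a` has an acceptance condition `C a : (A → Bool) → Bool`. -/
structure ADF (A : Type*) where
  C : A → (A → Bool) → Bool

/-- The trivial interpretation mapping every argument to undecided. -/
def trivialInterp (A : Type*) : A → TV := fun _ => TV.u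

/-- The parents of `a` are the arguments on which its acceptance condition depends. -/
def ADF.parents {A : Type*} [DecidableEq A] (D : ADF A) (a : A) : Set A :=
  {b | ∃ w : A → Bool, D.C a w ≠ D.C a (Function.update w b (!w b))}

/-- A two-valued assignment `w` completes a three-valued interpretation `v`. -/
def Completes {A : Type*} (w : A → Bool) (v : A → TV) : Prop :=
  ∀ b, (v b = TV.t → w b = true) ∧ (v b = TV.f → w b = false)

/-- `φ` is irrefutable under `v`: every completion of `v` makes `φ` true. -/
def Irrefutable {A : Type*} (φ : (A → Bool) → Bool) (v : A → TV) : Prop :=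
  ∀ w : A → Bool, Completes w v → φ w = true

/-- `φ` is unsatisfiable under `v`: every completion of `v` makes `φ` false. -/
def Unsat {A : Type*} (φ : (A → Bool) → Bool) (v : A → TV) : Prop :=
  ∀ w : A → Bool, Completes w v → φ w = false

open Classical in
/-- The characteristic operator Γ_D of an ADF. -/
noncomputable def Gamma {A : Type*} (D : ADF A) (v : A → TV) : A → TV := fun a =>
  if Irrefutable (D.C a) v then TV.t
  else if Unsat (D.C a) v then TV.f
  else TV.u

open Classical in
/-- `v|_P`: agrees with `v` on `P` and is undecided elsewhere. -/
noncomputable def restrictTV {A : Type*} (v : A → TV) (P : Set A) : A → TV :=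
  fun b => if b ∈ P then v b else TV.u

/-- Strong acceptability/deniability of an argument with respect to interpretation `v`
and set `S`, relative to an excluded set `E` (the first index). An argument `a` with
`v a = t` (resp. `v a = f`) is strongly acceptable (resp. strongly deniable) iff there is
`P ⊆ (parents a ∩ S) \ E` with `φ_a^{v|_P}` irrefutable (resp. unsatisfiable) and every
`p ∈ P` strongly acceptable/deniable relative to `E ∪ {p}`. -/
inductive SJrel {A : Type*} [DecidableEq A] (D : ADF A) (v : A → TV) (S : Set A) :
    Set A → A → Prop
  | acc (E : Set A) (a : A) (P : Set A)
      (ha : v a = TV.t)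
      (hP : P ⊆ (D.parents a ∩ S) \ E)
      (hirr : Irrefutable (D.C a) (restrictTV v P))
      (hrec : ∀ p ∈ P, SJrel D v S (E ∪ {p}) p) : SJrel D v S E a
  | den (E : Set A) (a : A) (P : Set A)
      (ha : v a = TV.f)
      (hP : P ⊆ (D.parents a ∩ S) \ E)
      (hunsat : Unsat (D.C a) (restrictTV v P))
      (hrec : ∀ p ∈ P, SJrel D v S (E ∪ {p}) p) : SJrel D v S E a

/-- `a` is strongly acceptable/deniable w.r.t. `v` and `S`
(i.e., relative to the excluded set `{a}`). -/
def StronglyJustified {A : Type*} [DecidableEq A] (D : ADF A) (v : A → TV)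
    (S : Set A) (a : A) : Prop :=
  SJrel D v S {a} a

/-- `S` is a least set for `a` with respect to `v`. -/
def LeastSet {A : Type*} [DecidableEq A] (D : ADF A) (v : A → TV)
    (a : A) (S : Set A) : Prop :=
  StronglyJustified D v S a ∧
  ∀ S' : Set A, S'.ncard < S.ncard → ¬ StronglyJustified D v S' a

/-- An interpretation is strongly admissible iff every argument assigned `t`/`f`
is strongly acceptable/deniable w.r.t. `v` and some set `S`. -/
def StronglyAdmissible {A : Type*} [DecidableEq A] (D : ADF A) (v : A → TV) : Prop :=
  ∀ a : A, v a ≠ TV.u → ∃ S : Set A, StronglyJustified D v S a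

/-- `g` is the grounded interpretation of `D`: the least fixed point of `Γ_D`. -/
def IsGrounded {A : Type*} (D : ADF A) (g : A → TV) : Prop :=
  Gamma D g = g ∧ ∀ w : A → TV, Gamma D w = w → ILE g w

/-- An interpretation is admissible iff `v ≤_i Γ_D(v)`. -/
def Admissible {A : Type*} (D : ADF A) (v : A → TV) : Prop :=
  ILE v (Gamma D v)

/-- An interpretation is conflict-free. -/
def ConflictFree {A : Type*} (D : ADF A) (v : A → TV) : Prop :=
  ∀ a : A, (v a = TV.t → ∃ w : A → Bool, Completes w v ∧ D.C a w = true) ∧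
           (v a = TV.f → Unsat (D.C a) v)

/-- The join of two interpretations: take `v`'s value where defined, else `w`'s. -/
def joinI {A : Type*} (v w : A → TV) : A → TV :=
  fun a => if v a = TV.u then w a else v a

/-- The information order as a partial order on truth values. Through it `A → TV` carries the
pointwise order `≤`, which is definitionally `ILE`. -/
instance TV.instPartialOrder : PartialOrder TV where
  le := TV.ile
  le_refl _ := Or.inr rfl
  le_trans x y z hxy hyz := by
    rcases hxy with rfl | rfl
    · exact Or.inl rfl
    · exact hyz
  le_antisymm x y hxy hyx := by
    rcases hxy with rfl | rfl
    · exact (hyx.elim id id).symm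
    · rfl

theorem ile_iff_le {A : Type*} {x y : A → TV} : ILE x y ↔ x ≤ y :=
  Iff.rfl

namespace TV

theorem u_le (x : TV) : u ≤ x :=
  Or.inl rfl

theorem eq_of_le_of_eq_of_ne_u {x y c : TV} (h : x ≤ y) (hx : x = c) (hc : c ≠ u) : y = c :=
  (h.resolve_left (hx ▸ hc)).symm.trans hx

theorem exists_isLUB_of_bddAbove {T : Set TV} (hT : BddAbove T) : ∃ x, IsLUB T x := by
  obtain ⟨b, hb⟩ := hT
  by_cases hbT : b ∈ T
  · exact ⟨b, IsGreatest.isLUB ⟨hbT, hb⟩⟩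
  · refine ⟨u, fun x hx => ?_, fun y _ => u_le y⟩
    by_contra hxu
    have hbx : b = x := eq_of_le_of_eq_of_ne_u (hb hx) rfl fun h => hxu h.le
    exact hbT (hbx ▸ hx)

end TV

section Interpretations

variable {A : Type*} {x y : A → TV}

theorem exists_isLUB_pi_of_bddAbove {X : Set (A → TV)} (hX : BddAbove X) : ∃ w, IsLUB X w := by
  choose w hw using fun a => TV.exists_isLUB_of_bddAbove (bddAbove_pi.1 hX a)
  exact ⟨w, isLUB_pi.2 hw⟩

theorem exists_ne_u_of_isLUB {X : Set (A → TV)} {w : A → TV} (hw : IsLUB X w) {a : A}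
    (ha : w a ≠ TV.u) : ∃ x ∈ X, x a ≠ TV.u := by
  by_contra! h
  have hu : TV.u ∈ upperBounds (Function.eval a '' X) := by
    rintro _ ⟨x, hx, rfl⟩
    exact (h x hx).le
  exact ha (((isLUB_pi.1 hw a).2 hu).antisymm (TV.u_le _))

theorem Completes.anti (h : x ≤ y) {w : A → Bool} (hw : Completes w y) : Completes w x :=
  fun b =>
    ⟨fun hb => (hw b).1 (TV.eq_of_le_of_eq_of_ne_u (h b) hb nofun),
      fun hb => (hw b).2 (TV.eq_of_le_of_eq_of_ne_u (h b) hb nofun)⟩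

theorem Irrefutable.mono {φ : (A → Bool) → Bool} (h : x ≤ y) (hx : Irrefutable φ x) :
    Irrefutable φ y :=
  fun w hw => hx w (hw.anti h)

theorem Unsat.mono {φ : (A → Bool) → Bool} (h : x ≤ y) (hx : Unsat φ x) : Unsat φ y :=
  fun w hw => hx w (hw.anti h)

theorem restrictTV_mono (h : x ≤ y) (P : Set A) : restrictTV x P ≤ restrictTV y P := by
  intro b
  unfold restrictTV
  split_ifs
  exacts [h b, le_rfl]

end Interpretations

section StronglyAdmissible

variable {A : Type*} [DecidableEq A] {D : ADF A}

theorem SJrel.mono {x y : A → TV} (h : x ≤ y) {S E : Set A} {a : A} (ha : SJrel D x S E a) :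
    SJrel D y S E a := by
  induction ha with
  | acc E a P ha hP hirr _ ih =>
    have hya := TV.eq_of_le_of_eq_of_ne_u (h a) ha nofun
    exact .acc E a P hya hP (hirr.mono (restrictTV_mono h P)) ih
  | den E a P ha hP hunsat _ ih =>
    have hya := TV.eq_of_le_of_eq_of_ne_u (h a) ha nofun
    exact .den E a P hya hP (hunsat.mono (restrictTV_mono h P)) ih

theorem StronglyAdmissible.of_isLUB {X : Set (A → TV)} {w : A → TV}
    (hX : ∀ x ∈ X, StronglyAdmissible D x) (hw : IsLUB X w) : StronglyAdmissible D w := by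
  intro a ha
  obtain ⟨x, hx, hxa⟩ := exists_ne_u_of_isLUB hw ha
  obtain ⟨S, hS⟩ := hX x hx a hxa
  exact ⟨S, hS.mono (hw.1 hx)⟩

end StronglyAdmissible

theorem strongly_admissible_infimum_general {A : Type*} [DecidableEq A] (D : ADF A)
    {V : Set (A → TV)} (hV : V.Nonempty) :
    ∃! w, IsGreatest ({x | StronglyAdmissible D x} ∩ lowerBounds V) w := by
  refine existsUnique_of_exists_of_unique ?_ fun _ _ => IsGreatest.unique
  have le_of_mem : ∀ v ∈ V, v ∈ upperBounds ({x | StronglyAdmissible D x} ∩ lowerBounds V) :=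
    fun v hv x hx => hx.2 hv
  obtain ⟨w, hw⟩ := exists_isLUB_pi_of_bddAbove (hV.mono le_of_mem)
  have hwD : StronglyAdmissible D w := .of_isLUB (fun _ hx => hx.1) hw
  exact ⟨w, ⟨hwD, fun v hv => hw.2 (le_of_mem v hv)⟩, hw.1⟩

/-- Every two strongly admissible interpretations have a unique
infimum among the strongly admissible interpretations. -/
theorem strongly_admissible_infimum {A : Type*} [Fintype A] [DecidableEq A]
    (D : ADF A) (v v' : A → TV)
    (hv : StronglyAdmissible D v) (hv' : StronglyAdmissible D v') :
    ∃! w : A → TV, StronglyAdmissible D w ∧ ILE w v ∧ ILE w v' ∧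
      ∀ w'' : A → TV, StronglyAdmissible D w'' → ILE w'' v → ILE w'' v' →
        ILE w'' w := by
  simpa [IsGreatest, mem_upperBounds, and_assoc, ile_iff_le] using
    strongly_admissible_infimum_general D (Set.insert_nonempty v {v'})
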